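/- arXiv:1006.1112 — 4 statements merged into one kernel-verified Lean document; each statement's English description precedes it below -/
import Mathlib

section
/- Let k be an algebraically closed field of characteristic zero, K a finite commutative group of order N, and K̂ = Hom(K, k*) its character group. For any isotropic subgroup E of H_K = K × K̂ with respect to e_K, the order of E divides N. -/
variable (k : Type) [Field k] [IsAlgClosed k] [CharZero k]
variable (K : Type) [AddCommGroup K] [Finite K]

/-- The character group `Hom(K, k*)` of `K` (characters written additively via `Additive`). -/
abbrev Khat := K →+ Additive kˣ

/-- `H_K = K × K̂`. -/
abbrev HK := K × Khat k K

/-- The pairing `e_K((x,ℓ),(x',ℓ')) = ℓ'(x)/ℓ(x')`. -/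
def eK (h h' : HK k K) : kˣ :=
  Additive.toMul (h'.2 h.1) / Additive.toMul (h.2 h'.1)

/-- The order of an isotropic subgroup of `H_K` divides `N`, the order of `K`. -/
theorem card_isotropic_dvd (N : ℕ) (hN : Nat.card K = N)
    (E : AddSubgroup (HK k K))
    (hE : ∀ e ∈ E, ∀ e' ∈ E, eK k K e e' = 1) :
    Nat.card E ∣ N := by
  classical
  let f : E →+ K := (AddMonoidHom.fst K (Khat k K)).comp E.subtype
  have hzero : ∀ b : f.ker, f.range ≤ (b.1.1.2).ker := by
    rintro ⟨⟨⟨x, l⟩, hb⟩, hx⟩ _ ⟨⟨⟨y, m⟩, hy⟩, rfl⟩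
    have hx0 : x = 0 := hx
    subst hx0
    have h := hE _ hb _ hy
    simp only [eK, map_zero, toMul_zero, one_div, inv_eq_one] at h
    exact h
  let φ : f.ker →+ (K ⧸ f.range →+ Additive kˣ) :=
    { toFun := fun b => QuotientAddGroup.lift f.range b.1.1.2 (hzero b)
      map_zero' := by
        ext x
        rfl
      map_add' := by
        intro a b
        ext x
        rfl }
  have hφ : Function.Injective φ := by
    intro a b hab
    have h2 : a.1.1.2 = b.1.1.2 := by
      ext x
      exact congrArg Additive.toMul (DFunLike.congr_fun hab (QuotientAddGroup.mk x)) |> congrArg Units.val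
    have h1 : a.1.1.1 = b.1.1.1 := (a.2 : a.1.1.1 = 0).trans (b.2 : b.1.1.1 = 0).symm
    exact Subtype.ext (Subtype.ext (Prod.ext h1 h2))
  have hcard : Nat.card (K ⧸ f.range →+ Additive kˣ) = Nat.card (K ⧸ f.range) := by
    have : NeZero ((Monoid.exponent (Multiplicative (K ⧸ f.range)) : ℕ) : k) :=
      ⟨Nat.cast_ne_zero.mpr Monoid.exponent_ne_zero_of_finite⟩
    rw [Nat.card_congr (AddMonoidHom.toMultiplicativeLeft (α := K ⧸ f.range) (β := kˣ))]
    exact CommGroup.card_monoidHom_of_hasEnoughRootsOfUnity (Multiplicative (K ⧸ f.range)) k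
  have hd := AddSubgroup.card_dvd_of_injective φ hφ
  rw [hcard] at hd
  rw [← hN, ← AddSubgroup.card_mul_index f.ker, AddSubgroup.index_ker,
    AddSubgroup.card_eq_card_quotient_mul_card_addSubgroup f.range]
  exact Nat.mul_dvd_mul_right hd _
end

section
/- Let k be an algebraically closed field of characteristic zero, K a finite commutative group of order N, and K̂ = Hom(K, k*) its character group. For any isotropic subgroup E of H_K = K × K̂ with respect to e_K, the index of E in H_K is divisible by N; in particular this index is at least N. -/
variable (k : Type) [Field k] [IsAlgClosed k] [CharZero k]
variable (K : Type) [AddCommGroup K] [Finite K]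

theorem card_khat_aux : Nat.card (Khat k K) = Nat.card K := by
  have : NeZero (Monoid.exponent (Multiplicative K)) :=
    ⟨Monoid.exponent_ne_zero_of_finite⟩
  have h := CommGroup.card_monoidHom_of_hasEnoughRootsOfUnity (Multiplicative K) k
  have e : (K →+ Additive kˣ) ≃ (Multiplicative K →* kˣ) := AddMonoidHom.toMultiplicativeLeft
  exact (Nat.card_congr e).trans h

/-- The index of an isotropic subgroup of `H_K` is divisible by `N`, the order of `K`;
in particular this index is at least `N`. -/
theorem card_dvd_index_isotropic (N : ℕ) (hN : Nat.card K = N)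
    (E : AddSubgroup (HK k K))
    (hE : ∀ e ∈ E, ∀ e' ∈ E, eK k K e e' = 1) :
    N ∣ E.index ∧ N ≤ E.index := by
  subst hN
  have hpos : 0 < Nat.card K := Nat.card_pos
  let f : E →+ K := (AddMonoidHom.fst K (Khat k K)).comp E.subtype
  have hz : ∀ b : f.ker, ∀ x ∈ f.range, (b : E).1.2 x = 0 := by
    rintro ⟨b, hb⟩ x ⟨e, rfl⟩
    have h := hE e.1 e.2 b.1 b.2
    have hb0 : b.1.1 = 0 := hb
    simp only [eK, hb0, map_zero, toMul_zero, div_one] at h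
    exact h
  let g : f.ker →+ Khat k (K ⧸ f.range) :=
    { toFun := fun b => QuotientAddGroup.lift f.range (b : E).1.2 (hz b)
      map_zero' := by
        ext x
        rfl
      map_add' := fun a b => by
        ext x
        rfl }
  have hg : Function.Injective g := by
    intro a b hab
    apply Subtype.ext
    apply Subtype.ext
    apply Prod.ext
    · exact (show (a : E).1.1 = 0 from a.2).trans (show (b : E).1.1 = 0 from b.2).symm
    · ext x
      have := DFunLike.congr_fun hab (x : K ⧸ f.range)
      exact congrArg (fun z => ((Additive.toMul z : kˣ) : k)) this
  have h1 : Nat.card f.ker ∣ Nat.card (K ⧸ f.range) := by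
    rw [← card_khat_aux k (K ⧸ f.range)]
    exact AddSubgroup.card_dvd_of_injective g hg
  have h2 : Nat.card E = Nat.card f.range * Nat.card f.ker := by
    rw [AddSubgroup.card_eq_card_quotient_mul_card_addSubgroup f.ker,
      Nat.card_congr (QuotientAddGroup.quotientKerEquivRange f).toEquiv]
  have h3 : Nat.card E ∣ Nat.card K := by
    rw [h2, AddSubgroup.card_eq_card_quotient_mul_card_addSubgroup f.range, mul_comm]
    exact mul_dvd_mul_right h1 _
  have h4 : Nat.card E * E.index = Nat.card K * Nat.card K := by
    rw [AddSubgroup.card_mul_index, Nat.card_prod, card_khat_aux]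
  obtain ⟨c, hc⟩ := h3
  have hEpos : 0 < Nat.card E := Nat.pos_of_ne_zero fun h => by
    rw [h, zero_mul] at hc
    omega
  have h5 : E.index = Nat.card K * c := by
    apply Nat.eq_of_mul_eq_mul_left hEpos
    rw [h4]
    nth_rewrite 2 [hc]
    ring
  have hcpos : 0 < c := Nat.pos_of_ne_zero fun h => by
    rw [h, mul_zero] at hc
    omega
  exact ⟨⟨c, h5⟩, h5 ▸ Nat.le_mul_of_pos_right _ hcpos⟩
end

section
/- Let k be an algebraically closed field of characteristic zero, K a finite commutative group of order N, and K̂ = Hom(K, k*) its character group. Every commutative subgroup Ẽ of the finite group G_K¹ = μ_N × K × K̂ has index at least N in G_K¹. -/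
set_option linter.unusedSectionVars false

variable (k : Type) [Field k] [IsAlgClosed k] [CharZero k]
variable (K : Type) [AddCommGroup K] [Finite K]

/-- The set `G_K = k* × K × K̂`. -/
abbrev GK := kˣ × K × Khat k K

/-- The product `(a, x, ℓ)·(a', x', ℓ') = (a·a'·ℓ'(x), x + x', ℓ·ℓ')` on `G_K`. -/
def gmul (g g' : GK k K) : GK k K :=
  (g.1 * g'.1 * Additive.toMul (g'.2.2 g.2.1), g.2.1 + g'.2.1, g.2.2 + g'.2.2)

/-- The identity element `(1, 0, 1)` of `G_K`. -/
def gone : GK k K := (1, 0, 0)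

/-- The inverse `(a, x, ℓ)⁻¹ = (a⁻¹·ℓ(x), −x, ℓ⁻¹)` on `G_K`. -/
def ginv (g : GK k K) : GK k K :=
  (g.1⁻¹ * Additive.toMul (g.2.2 g.2.1), -g.2.1, -g.2.2)

theorem gmul_assoc (g g' g'' : GK k K) :
    gmul k K (gmul k K g g') g'' = gmul k K g (gmul k K g' g'') := by
  unfold gmul
  refine Prod.ext ?_ (Prod.ext ?_ ?_)
  · simp [map_add, toMul_add, mul_assoc, mul_comm, mul_left_comm]
  · simp [add_assoc]
  · exact @add_assoc (Khat k K) _ _ _ _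

theorem gone_mul (g : GK k K) : gmul k K (gone k K) g = g := by
  unfold gmul gone
  refine Prod.ext ?_ (Prod.ext ?_ ?_)
  · simp
  · simp
  · exact @zero_add (Khat k K) _ _

theorem gmul_one (g : GK k K) : gmul k K g (gone k K) = g := by
  unfold gmul gone
  refine Prod.ext ?_ (Prod.ext ?_ ?_)
  · simp
  · simp
  · exact @add_zero (Khat k K) _ _

theorem ginv_mul (g : GK k K) : gmul k K (ginv k K g) g = gone k K := by
  unfold gmul ginv gone
  refine Prod.ext ?_ (Prod.ext ?_ ?_)
  · simp [mul_assoc, mul_comm, mul_left_comm]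
  · simp
  · exact @neg_add_cancel (Khat k K) _ _

/-- The group `G_K`: the set `k* × K × K̂` equipped with the product
`(a, x, ℓ)·(a', x', ℓ') = (a·a'·ℓ'(x), x + x', ℓ·ℓ')`. -/
instance : Group (GK k K) where
  mul := gmul k K
  one := gone k K
  inv := ginv k K
  mul_assoc := gmul_assoc k K
  one_mul := gone_mul k K
  mul_one := gmul_one k K
  inv_mul_cancel := ginv_mul k K

/-- The projection `π : G_K → H_K`, `(a, x, ℓ) ↦ (x, ℓ)`. -/
def pigk (g : GK k K) : HK k K := g.2
/-- For each character `ℓ` and each `x : K`, the value `ℓ(x)` is an `N`-th root of unity,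
where `N` is the order of `K`. -/
theorem char_val_pow (N : ℕ) (hN : Nat.card K = N) (ℓ : Khat k K) (x : K) :
    Additive.toMul (ℓ x) ^ N = 1 := by
  have hx : N • x = 0 := by
    subst hN
    exact card_nsmul_eq_zero'
  calc Additive.toMul (ℓ x) ^ N = Additive.toMul (N • ℓ x) := rfl
    _ = Additive.toMul (ℓ (N • x)) := congrArg Additive.toMul (ℓ.map_nsmul N x).symm
    _ = 1 := by rw [hx, map_zero]; rfl

/-- The subgroup `G_K¹ = μ_N × K × K̂` of `G_K`, where `μ_N ⊆ k*` is the group of `N`-th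
roots of unity and `N` is the order of `K`. -/
def GK1 (N : ℕ) (hN : Nat.card K = N) : Subgroup (GK k K) where
  carrier := {g | g.1 ^ N = 1}
  one_mem' := by
    show (gone k K).1 ^ N = 1
    simp [gone]
  mul_mem' := by
    intro a b ha hb
    show (gmul k K a b).1 ^ N = 1
    simp only [gmul, mul_pow]
    rw [ha, hb, char_val_pow k K N hN]
    simp
  inv_mem' := by
    intro a ha
    show (ginv k K a).1 ^ N = 1
    simp only [ginv, mul_pow, inv_pow]
    rw [ha, char_val_pow k K N hN]
    simp

theorem card_dual_aux (A : Type) [AddCommGroup A] [Finite A] :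
    Nat.card (A →+ Additive kˣ) = Nat.card A := by
  have h := CommGroup.card_monoidHom_of_hasEnoughRootsOfUnity (Multiplicative A) k
  rw [← Nat.card_congr (AddMonoidHom.toMultiplicativeLeft (α := A) (β := kˣ))] at h
  exact h

/-- The projection to `K` as a homomorphism. -/
def projK (N : ℕ) (hN : Nat.card K = N) (E : Subgroup (GK1 k K N hN)) :
    E →* Multiplicative K where
  toFun g := Multiplicative.ofAdd g.1.1.2.1
  map_one' := rfl
  map_mul' _ _ := rfl

theorem comm_aux (a b : GK k K) (h : a * b = b * a) (ha : a.2.1 = 0) :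
    a.2.2 b.2.1 = 0 := by
  have h1 : (gmul k K a b).1 = (gmul k K b a).1 := congrArg Prod.fst h
  simp only [gmul, ha, map_zero, toMul_zero, mul_one] at h1
  rw [mul_comm b.1 a.1] at h1
  have h2 := mul_eq_left.mp h1.symm
  exact h2

theorem card_GK1 (N : ℕ) (hN : Nat.card K = N) :
    Nat.card (GK1 k K N hN) = Nat.card (rootsOfUnity N k) * (N * N) := by
  have e : GK1 k K N hN ≃ rootsOfUnity N k × (K × Khat k K) :=
    { toFun := fun g => (⟨g.1.1, (mem_rootsOfUnity N g.1.1).2 g.2⟩, g.1.2)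
      invFun := fun p => ⟨(p.1.1, p.2), (mem_rootsOfUnity N p.1.1).1 p.1.2⟩
      left_inv := fun _ => rfl
      right_inv := fun _ => rfl }
  rw [Nat.card_congr e, Nat.card_prod, Nat.card_prod, card_dual_aux, hN]

theorem card_ker_le (N : ℕ) [NeZero N] (hN : Nat.card K = N) (E : Subgroup (GK1 k K N hN))
    (hE : ∀ a ∈ E, ∀ b ∈ E, a * b = b * a) :
    Nat.card (projK k K N hN E).ker ≤ Nat.card (rootsOfUnity N k) *
      Nat.card (K ⧸ (Subgroup.toAddSubgroup' (projK k K N hN E).range)) := by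
  rw [← card_dual_aux k (K ⧸ (Subgroup.toAddSubgroup' (projK k K N hN E).range)), ← Nat.card_prod]
  have hfin : Finite ((K ⧸ (Subgroup.toAddSubgroup' (projK k K N hN E).range)) →+ Additive kˣ) := by
    apply Nat.finite_of_card_ne_zero
    rw [card_dual_aux]
    exact Nat.card_pos.ne'
  have hker : ∀ g : (projK k K N hN E).ker, g.1.1.1.2.1 = 0 := fun g => g.2
  have hle : ∀ g : (projK k K N hN E).ker,
      Subgroup.toAddSubgroup' (projK k K N hN E).range ≤ g.1.1.1.2.2.ker := by
    rintro g x ⟨b, hb⟩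
    have hc := hE g.1.1 g.1.2 b.1 b.2
    have := comm_aux k K g.1.1.1 b.1.1 (congrArg Subtype.val hc) (hker g)
    have hx : b.1.1.2.1 = x := hb
    rw [hx] at this
    exact this
  let F : (projK k K N hN E).ker → rootsOfUnity N k ×
      ((K ⧸ (Subgroup.toAddSubgroup' (projK k K N hN E).range)) →+ Additive kˣ) := fun g =>
    (⟨g.1.1.1.1, (mem_rootsOfUnity N _).2 g.1.1.2⟩, QuotientAddGroup.lift _ g.1.1.1.2.2 (hle g))
  apply Nat.card_le_card_of_injective F
  intro g g' h
  have h1 : g.1.1.1.1 = g'.1.1.1.1 := congrArg (fun p => p.1.1) h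
  have h2 : g.1.1.1.2.2 = g'.1.1.1.2.2 := by
    ext x
    have := DFunLike.congr_fun (congrArg Prod.snd h) (QuotientAddGroup.mk x)
    exact congrArg (fun u : Additive kˣ => ((Additive.toMul u : kˣ) : k)) this
  apply Subtype.ext
  apply Subtype.ext
  apply Subtype.ext
  exact Prod.ext h1 (Prod.ext ((hker g).trans (hker g').symm) h2)

/-- Every commutative subgroup `Ẽ` of the finite group `G_K¹ = μ_N × K × K̂` has index at
least `N` in `G_K¹`, where `N` is the order of `K`. -/
theorem GK1_commutative_subgroup_index (N : ℕ) (hN : Nat.card K = N)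
    (E : Subgroup (GK1 k K N hN)) (hE : ∀ a ∈ E, ∀ b ∈ E, a * b = b * a) :
    N ≤ E.index := by
  have hN0 : N ≠ 0 := hN ▸ Nat.card_pos.ne'
  have : NeZero N := ⟨hN0⟩
  have h1 := E.card_mul_index
  rw [card_GK1] at h1
  have h2 := (projK k K N hN E).ker.card_mul_index
  rw [Subgroup.index_ker] at h2
  have h3 := card_ker_le k K N hN E hE
  have h4 := (Subgroup.toAddSubgroup' (projK k K N hN E).range).card_mul_index
  rw [hN] at h4
  have h5 : Nat.card (Subgroup.toAddSubgroup' (projK k K N hN E).range)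
    = Nat.card (projK k K N hN E).range := rfl
  rw [h5] at h4
  change _ ≤ _ * (Subgroup.toAddSubgroup' (projK k K N hN E).range).index at h3
  have hμ : 0 < Nat.card (rootsOfUnity N k) := Nat.card_pos
  have hE2 : Nat.card E ≤ Nat.card (rootsOfUnity N k) * N := by
    rw [← h2]
    calc _ ≤ _ := Nat.mul_le_mul_right _ h3
      _ = _ := by rw [mul_assoc, mul_comm (AddSubgroup.index _), h4]
  have hpos : 0 < Nat.card (rootsOfUnity N k) * N := Nat.mul_pos hμ (Nat.pos_of_ne_zero hN0)
  refine Nat.le_of_mul_le_mul_left ?_ hpos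
  calc _ = Nat.card E * E.index := by rw [h1, mul_assoc]
    _ ≤ _ := Nat.mul_le_mul_right _ hE2
end

section
/- For every positive integer N there exists a finite group G such that every commutative subgroup of G has index at least N in G. -/
/-- For every positive integer `N` there exists a finite group `G` such that every
commutative subgroup of `G` has index at least `N` in `G`. -/
theorem exists_finite_group_large_commutative_index (N : ℕ) (hN : 0 < N) :
    ∃ (G : Type) (_ : Group G), Finite G ∧
      ∀ H : Subgroup G, (∀ a ∈ H, ∀ b ∈ H, a * b = b * a) → N ≤ H.index := by
  induction N, hN using Nat.le_induction with
  | base =>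
    refine ⟨Equiv.Perm (Fin 3), inferInstance, inferInstance, fun H _ => ?_⟩
    exact Nat.one_le_iff_ne_zero.mpr Subgroup.index_ne_zero_of_finite
  | succ n hn ih =>
    obtain ⟨G, hG, hfin, h⟩ := ih
    refine ⟨G × Equiv.Perm (Fin 3), inferInstance, inferInstance, fun H hH => ?_⟩
    set A := H.map (MonoidHom.fst G (Equiv.Perm (Fin 3))) with hA
    set B := H.map (MonoidHom.snd G (Equiv.Perm (Fin 3))) with hB
    have hle : H ≤ A.prod B := fun x hx =>
      Subgroup.mem_prod.mpr ⟨⟨x, hx, rfl⟩, ⟨x, hx, rfl⟩⟩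
    have h1 : n ≤ A.index := by
      apply h
      rintro _ ⟨x, hx, rfl⟩ _ ⟨y, hy, rfl⟩
      exact congrArg Prod.fst (hH x hx y hy)
    have hBc : ∀ a ∈ B, ∀ b ∈ B, a * b = b * a := by
      rintro _ ⟨x, hx, rfl⟩ _ ⟨y, hy, rfl⟩
      exact congrArg Prod.snd (hH x hx y hy)
    have h2 : B.index ≠ 0 := Subgroup.index_ne_zero_of_finite
    have h3 : B.index ≠ 1 := by
      intro hb
      rw [Subgroup.index_eq_one] at hb
      rw [hb] at hBc
      have := hBc (Equiv.swap 0 1) (Subgroup.mem_top _) (Equiv.swap 1 2) (Subgroup.mem_top _)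
      revert this
      decide
    have h4 := Nat.le_of_dvd (Nat.pos_of_ne_zero Subgroup.index_ne_zero_of_finite)
      (Subgroup.index_dvd_of_le hle)
    rw [Subgroup.index_prod] at h4
    have h5 : n * 2 ≤ A.index * B.index := Nat.mul_le_mul h1 (by omega)
    omega
end
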